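/- (Denominator claim used in the proof of Lemma "miSameAsvi": m̄ᵢ has denominator exactly 2ⁱ.) Under the stated hypotheses, for every i with 1 ≤ i ≤ 4 one has 2ⁱ·mᵢ ∈ S but 2^{i−1}·mᵢ ∉ S; equivalently, 2ⁱ·mᵢ is an element of S not lying in 2S. -/

import Mathlib

/-!
If `m - γ m = a` and `γ² m = -m`, applying `γ` to the first relation gives `γ m + m = γ a`, so
`2 m = a + γ a` and `2 γ m = γ a - a`. Hence the logarithm relations determine every `mᵢ`
recursively, and clearing denominators gives `2ⁱ mᵢ = ι Nᵢ`, `2ⁱ γ mᵢ = ι Nᵢ'` for explicit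
integral polynomials `Nᵢ`, `Nᵢ'`. At the point `r₁ = 1`, `s₁ = r₃ = s₃ = 0` the polynomial `Nᵢ`
takes the value `±1`, which is not divisible by `2` in `ℤ₍₂₎`, so `Nᵢ ∉ 2S`; as `ι` is injective,
`2ⁱ⁻¹ mᵢ ∉ S`.
-/

noncomputable section

open MvPolynomial

instance : (Ideal.span {(2 : ℤ)}).IsPrime :=
  (Ideal.span_singleton_prime (by norm_num)).mpr Int.prime_two

/-- `ℤ₍₂₎`, the localization of `ℤ` at the prime ideal `(2)`. -/
abbrev Zloc : Type := Localization.AtPrime (Ideal.span {(2 : ℤ)})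

/-- `S = ℤ₍₂₎[r₁, s₁, r₃, s₃]`, the polynomial ring in four variables over `ℤ₍₂₎`. -/
abbrev S : Type := MvPolynomial (Fin 4) Zloc

/-- The generator `r₁`. -/
def r1 : S := X 0
/-- The generator `s₁` (playing the role of `γr̄₁`). -/
def s1 : S := X 1
/-- The generator `r₃`. -/
def r3 : S := X 2
/-- The generator `s₃` (playing the role of `γr̄₃`). -/
def s3 : S := X 3

/-- `S[1/2]`, the localization of `S` away from `2`. -/
abbrev S2 : Type := Localization.Away (2 : S)

/-- The canonical map `S → S[1/2]`. -/
def ι : S →+* S2 := algebraMap S S2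

theorem not_isUnit_two_Zloc : ¬ IsUnit (2 : Zloc) := by
  have h := IsLocalization.AtPrime.isUnit_to_map_iff Zloc (Ideal.span {(2 : ℤ)}) 2
  rw [map_ofNat] at h
  rw [h]
  exact fun h' => h' (Ideal.mem_span_singleton_self 2)

theorem ι_injective : Function.Injective ι := by
  have h2 : (2 : S) ≠ 0 := by
    have h : (2 : Zloc) ≠ 0 := by
      have hinj : Function.Injective (algebraMap ℤ Zloc) :=
        IsLocalization.injective Zloc
          (Ideal.primeCompl_le_nonZeroDivisors (Ideal.span {(2 : ℤ)}))
      intro h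
      have h' : algebraMap ℤ Zloc 2 = algebraMap ℤ Zloc 0 := by
        rw [map_ofNat, map_zero]; exact h
      exact absurd (hinj h') (by norm_num)
    intro h0
    apply h
    have := congrArg (eval (0 : Fin 4 → Zloc)) h0
    rwa [map_ofNat, map_zero] at this
  exact IsLocalization.injective S2 (powers_le_nonZeroDivisors_of_noZeroDivisors h2)

/-- Evaluation at the point `r₁ = 1`, `s₁ = r₃ = s₃ = 0`, where the numerators become `±1`. -/
def evalPt : S →+* Zloc := eval ![1, 0, 0, 0]

theorem evalPt_r1 : evalPt r1 = 1 := by simp [evalPt, r1]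
theorem evalPt_s1 : evalPt s1 = 0 := by simp [evalPt, s1]
theorem evalPt_r3 : evalPt r3 = 0 := by simp [evalPt, r3]
theorem evalPt_s3 : evalPt s3 = 0 := by simp [evalPt, s3]

/-- An element with numerator `N` over `2 ^ (k + 1)` has exactly this denominator as soon as `N`
takes a unit value at the chosen point. -/
theorem denominator_of_numerator (k : ℕ) (m : S2) (N : S) (hN : 2 ^ (k + 1) * m = ι N)
    (hu : IsUnit (evalPt N)) :
    2 ^ (k + 1) * m ∈ Set.range ⇑ι ∧ 2 ^ k * m ∉ Set.range ⇑ι := by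
  refine ⟨⟨N, hN.symm⟩, ?_⟩
  rintro ⟨q, hq⟩
  have h : N = 2 * q := by
    apply ι_injective
    rw [map_mul, map_ofNat, hq, ← hN]
    ring
  rw [h, map_mul, map_ofNat] at hu
  exact not_isUnit_two_Zloc (isUnit_of_mul_isUnit_left hu)

/-- **Denominator claim.**  For `1 ≤ i ≤ 4`, `2ⁱ·mᵢ ∈ S` but `2^{i−1}·mᵢ ∉ S`. -/
theorem m_denominator
    (γ : S2 ≃+* S2)
    (hγr1 : γ (ι r1) = ι s1) (hγs1 : γ (ι s1) = -ι r1)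
    (hγr3 : γ (ι r3) = ι s3) (hγs3 : γ (ι s3) = -ι r3)
    (m1 m2 m3 m4 : S2)
    (hγ2m1 : γ (γ m1) = -m1) (hγ2m2 : γ (γ m2) = -m2)
    (hγ2m3 : γ (γ m3) = -m3) (hγ2m4 : γ (γ m4) = -m4)
    (hlog1 : m1 - γ m1 = ι r1)
    (hlog2 : m2 - γ m2 = γ m1 * ι r1 ^ 2 + ι r3)
    (hlog3 : m3 - γ m3 = γ m2 * ι r1 ^ 4 + γ m1 * ι r3 ^ 2)
    (hlog4 : m4 - γ m4 = γ m3 * ι r1 ^ 8 + γ m2 * ι r3 ^ 4)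
    : (2 ^ 1 * m1 ∈ Set.range ⇑ι ∧ 2 ^ 0 * m1 ∉ Set.range ⇑ι) ∧
      (2 ^ 2 * m2 ∈ Set.range ⇑ι ∧ 2 ^ 1 * m2 ∉ Set.range ⇑ι) ∧
      (2 ^ 3 * m3 ∈ Set.range ⇑ι ∧ 2 ^ 2 * m3 ∉ Set.range ⇑ι) ∧
      (2 ^ 4 * m4 ∈ Set.range ⇑ι ∧ 2 ^ 3 * m4 ∉ Set.range ⇑ι) := by
  have e1 := congrArg γ hlog1
  have e2 := congrArg γ hlog2
  have e3 := congrArg γ hlog3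
  have e4 := congrArg γ hlog4
  simp only [map_sub, map_add, map_mul, map_pow, hγr1, hγr3, hγ2m1, hγ2m2, hγ2m3, hγ2m4]
    at e1 e2 e3 e4
  -- `Nᵢ` and `Nᵢ'` are the numerators of `mᵢ` and `γ mᵢ` over `2ⁱ`.
  obtain ⟨N1, hN1⟩ : ∃ N, N = r1 + s1 := ⟨_, rfl⟩
  obtain ⟨N1', hN1'⟩ : ∃ N, N = s1 - r1 := ⟨_, rfl⟩
  obtain ⟨N2, hN2⟩ : ∃ N, N = N1' * r1 ^ 2 - N1 * s1 ^ 2 + 2 * (r3 + s3) := ⟨_, rfl⟩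
  obtain ⟨N2', hN2'⟩ : ∃ N, N = -N1 * s1 ^ 2 - N1' * r1 ^ 2 + 2 * (s3 - r3) := ⟨_, rfl⟩
  obtain ⟨N3, hN3⟩ : ∃ N, N = N2' * r1 ^ 4 + 2 * N1' * r3 ^ 2
      - N2 * s1 ^ 4 - 2 * N1 * s3 ^ 2 := ⟨_, rfl⟩
  obtain ⟨N3', hN3'⟩ : ∃ N, N = -N2 * s1 ^ 4 - 2 * N1 * s3 ^ 2
      - N2' * r1 ^ 4 - 2 * N1' * r3 ^ 2 := ⟨_, rfl⟩
  obtain ⟨N4, hN4⟩ : ∃ N, N = N3' * r1 ^ 8 + 2 * N2' * r3 ^ 4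
      - N3 * s1 ^ 8 - 2 * N2 * s3 ^ 4 := ⟨_, rfl⟩
  have k1 : 2 ^ (0 + 1) * m1 = ι N1 := by
    rw [hN1, map_add]
    linear_combination hlog1 + e1
  have k1' : 2 ^ (0 + 1) * γ m1 = ι N1' := by
    rw [hN1', map_sub]
    linear_combination e1 - hlog1
  have k2 : 2 ^ (1 + 1) * m2 = ι N2 := by
    rw [hN2]
    simp only [map_add, map_sub, map_mul, map_pow, map_ofNat, ← k1, ← k1']
    linear_combination 2 * (hlog2 + e2)
  have k2' : 2 ^ (1 + 1) * γ m2 = ι N2' := by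
    rw [hN2']
    simp only [map_add, map_sub, map_mul, map_neg, map_pow, map_ofNat, ← k1, ← k1']
    linear_combination 2 * (e2 - hlog2)
  have k3 : 2 ^ (2 + 1) * m3 = ι N3 := by
    rw [hN3]
    simp only [map_add, map_sub, map_mul, map_pow, map_ofNat, ← k1, ← k1', ← k2, ← k2']
    linear_combination 4 * (hlog3 + e3)
  have k3' : 2 ^ (2 + 1) * γ m3 = ι N3' := by
    rw [hN3']
    simp only [map_sub, map_mul, map_neg, map_pow, map_ofNat, ← k1, ← k1', ← k2, ← k2']
    linear_combination 4 * (e3 - hlog3)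
  have k4 : 2 ^ (3 + 1) * m4 = ι N4 := by
    rw [hN4]
    simp only [map_add, map_sub, map_mul, map_pow, map_ofNat, ← k2, ← k2', ← k3, ← k3']
    linear_combination 8 * (hlog4 + e4)
  refine ⟨denominator_of_numerator 0 m1 N1 k1 ?_, denominator_of_numerator 1 m2 N2 k2 ?_,
    denominator_of_numerator 2 m3 N3 k3 ?_, denominator_of_numerator 3 m4 N4 k4 ?_⟩ <;>
  simp [hN1, hN1', hN2, hN2', hN3, hN3', hN4, evalPt_r1, evalPt_s1, evalPt_r3, evalPt_s3]
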